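/- For every ε > 0 there exists C_ε > 0 with the following property. For all dyadic N, N₁, N₂, N₃ ≥ 1, all m ∈ ℤ, and every fixed pair (n₁, n₃) ∈ (ℤ²)², the number of pairs (n, n₂) with (n, n₁, n₂, n₃) ∈ S^{𝐍,(m)} is at most C_ε · (min(N, N₂))^ε, uniformly in n₁, n₃, and m. -/

import Mathlib

/-- Euclidean norm of a lattice point in `ℤ²`. -/
noncomputable def znorm (n : ℤ × ℤ) : ℝ := Real.sqrt ((n.1 : ℝ) ^ 2 + (n.2 : ℝ) ^ 2)

/-- Squared Euclidean norm `|n|²` of `n ∈ ℤ²`, as an integer. -/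
def nsq (n : ℤ × ℤ) : ℤ := n.1 ^ 2 + n.2 ^ 2

/-- `φ(n̄) = |n|² − |n₁|² + |n₂|² − |n₃|²`. -/
def phiFn (n n₁ n₂ n₃ : ℤ × ℤ) : ℤ := nsq n - nsq n₁ + nsq n₂ - nsq n₃

/-- `N` is a dyadic number: `N = 2^k` for some integer `k ≥ 0`. -/
def IsDyadic (N : ℝ) : Prop := ∃ k : ℕ, N = 2 ^ k

/-- `|n| ∼ N`: for dyadic `N ≥ 2` this means `N/2 < |n| ≤ N`; for `N = 1` it means `|n| ≤ 1`. -/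
def simDyadic (N : ℝ) (n : ℤ × ℤ) : Prop :=
  (N = 1 ∧ znorm n ≤ 1) ∨ (N ≠ 1 ∧ N / 2 < znorm n ∧ znorm n ≤ N)

/-- Membership in the set `S^{𝐍,(m)}`. -/
def SMem (N N₁ N₂ N₃ : ℝ) (m : ℤ) (n n₁ n₂ n₃ : ℤ × ℤ) : Prop :=
  n = n₁ - n₂ + n₃ ∧ n ≠ n₁ ∧ n ≠ n₃ ∧ phiFn n n₁ n₂ n₃ = m ∧
    simDyadic N n ∧ simDyadic N₁ n₁ ∧ simDyadic N₂ n₂ ∧ simDyadic N₃ n₃ 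

/-- Gaussian integers of norm `n`. -/
def gset (n : ℕ) : Set GaussianInt := {z | z.norm = (n : ℤ)}

lemma gset_finite (n : ℕ) : (gset n).Finite := by
  have hf : ((Set.Icc (-(n : ℤ)) n) ×ˢ (Set.Icc (-(n : ℤ)) n)).Finite :=
    (Set.finite_Icc _ _).prod (Set.finite_Icc _ _)
  refine (hf.image (fun q : ℤ × ℤ => (⟨q.1, q.2⟩ : GaussianInt))).subset ?_
  intro z hz
  have hz' : z.norm = (n : ℤ) := hz
  rw [Zsqrtd.norm_def] at hz'
  refine ⟨(z.re, z.im), ?_, rfl⟩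
  simp only [Set.mem_prod, Set.mem_Icc]
  refine ⟨⟨?_, ?_⟩, ?_, ?_⟩ <;> nlinarith [sq_nonneg (z.re), sq_nonneg z.im,
    Int.le_self_sq z.re, Int.le_self_sq z.im, Int.le_self_sq (-z.re), Int.le_self_sq (-z.im)]

lemma gauss_decomp (p : ℕ) (hp : p.Prime) (π : GaussianInt) (hπ : Prime π) (hd : π ∣ (p : GaussianInt))
    (e : ℕ) (he : 1 ≤ e) (hn : π.norm = ((p ^ e : ℕ) : ℤ)) (m : ℕ) (hm : ¬ p ∣ m) :
    ∀ a : ℕ, ∀ z : GaussianInt, z.norm = ((p ^ a * m : ℕ) : ℤ) →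
      ∃ i j : ℕ, ∃ w : GaussianInt, z = π ^ i * star π ^ j * w ∧ w ∈ gset m ∧ e * (i + j) = a := by
  intro a
  induction a using Nat.strong_induction_on with
  | _ a ih =>
    intro z hz
    rcases Nat.eq_zero_or_pos a with h0 | hpos
    · subst h0
      exact ⟨0, 0, z, by simp, by simpa [gset] using hz, by simp⟩
    have key : ∀ z' : GaussianInt, z.norm = π.norm * z'.norm →
        e ≤ a ∧ z'.norm = ((p ^ (a - e) * m : ℕ) : ℤ) := by
      intro z' h
      have h' : z'.norm = ((z'.norm.natAbs : ℕ) : ℤ) := (GaussianInt.abs_natCast_norm z').symm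
      generalize z'.norm.natAbs = t at h'
      rw [hz, hn, h'] at h
      have h2 : p ^ a * m = p ^ e * t := by exact_mod_cast h
      have hea : e ≤ a := by
        by_contra hlt
        push Not at hlt
        obtain ⟨d, rfl⟩ := Nat.exists_eq_add_of_lt hlt
        apply hm
        have h3 : p ^ a * m = p ^ a * (p * (p ^ d * t)) := by rw [h2]; ring
        exact ⟨_, Nat.eq_of_mul_eq_mul_left (pow_pos hp.pos _) h3⟩
      refine ⟨hea, ?_⟩
      rw [h']
      have h3 : p ^ e * (p ^ (a - e) * m) = p ^ e * t := by
        rw [← h2, ← mul_assoc, ← pow_add, Nat.add_sub_cancel' hea]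
      have := Nat.eq_of_mul_eq_mul_left (pow_pos hp.pos _) h3
      rw [this]
    have hdz : π ∣ z * star z := by
      rw [← Zsqrtd.norm_eq_mul_conj, hz]
      refine hd.trans ?_
      have : p ∣ p ^ a * m := (dvd_pow_self p hpos.ne').mul_right m
      obtain ⟨c, hc⟩ := this
      rw [hc]
      exact ⟨(c : GaussianInt), by push_cast; ring⟩
    rcases hπ.dvd_or_dvd hdz with ⟨z', h⟩ | ⟨z', h⟩
    · obtain ⟨h1, h2⟩ := key z' (by rw [h, Zsqrtd.norm_mul])
      obtain ⟨i, j, w, rfl, hw, hij⟩ := ih (a - e) (by omega) z' h2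
      exact ⟨i + 1, j, w, by rw [h]; ring, hw, by rw [show i + 1 + j = i + j + 1 by ring, mul_add]; omega⟩
    · have h' : z = star π * star z' := by
        rw [← star_star z, h, star_mul, mul_comm]
      obtain ⟨h1, h2⟩ := key (star z') (by rw [h', Zsqrtd.norm_mul, Zsqrtd.norm_conj])
      obtain ⟨i, j, w, hz', hw, hij⟩ := ih (a - e) (by omega) (star z') h2
      exact ⟨i, j + 1, w, by rw [h', hz']; ring, hw, by rw [← add_assoc, mul_add]; omega⟩

lemma gset_step (p a m : ℕ) (hp : p.Prime) (hm : ¬ p ∣ m) :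
    (gset (p ^ a * m)).ncard ≤ (a + 1) * (gset m).ncard := by
  have hp0 : (p : GaussianInt) ≠ 0 := by exact_mod_cast hp.ne_zero
  have hpu : ¬ IsUnit (p : GaussianInt) := by
    rw [← Zsqrtd.norm_eq_one_iff, Zsqrtd.norm_natCast]
    intro h
    have : p * p = 1 := by exact_mod_cast h
    exact hp.ne_one (Nat.eq_one_of_mul_eq_one_left this)
  obtain ⟨π, hirr, hd⟩ := WfDvdMonoid.exists_irreducible_factor hpu hp0
  have hnd : π.norm.natAbs ∣ p ^ 2 := by
    obtain ⟨c, hc⟩ := hd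
    have := congrArg (fun z : GaussianInt => z.norm.natAbs) hc
    simp only [Zsqrtd.norm_mul, Zsqrtd.norm_natCast, Int.natAbs_mul, Int.natAbs_natCast] at this
    exact ⟨_, by rw [sq]; exact this⟩
  obtain ⟨e, -, he⟩ := (Nat.dvd_prime_pow hp).1 hnd
  have he1 : 1 ≤ e := by
    rcases Nat.eq_zero_or_pos e with h | h
    · subst h
      exact absurd (Zsqrtd.norm_eq_one_iff.1 (by simpa using he)) hirr.not_isUnit
    · exact h
  have hn : π.norm = ((p ^ e : ℕ) : ℤ) := by rw [← he, GaussianInt.abs_natCast_norm]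
  have hsub : gset (p ^ a * m) ⊆ Set.image (fun q : ℕ × GaussianInt => π ^ q.1 * star π ^ (a / e - q.1) * q.2)
      ((Finset.range (a + 1) : Set ℕ) ×ˢ gset m) := by
    intro z hz
    obtain ⟨i, j, w, h, hw, hij⟩ := gauss_decomp p hp π hirr.prime hd e he1 hn m hm a z hz
    have h1 : a / e = i + j := by rw [← hij]; exact Nat.mul_div_cancel_left _ he1
    refine ⟨(i, w), ⟨?_, hw⟩, ?_⟩
    · simp only [Finset.coe_range, Set.mem_Iio]
      nlinarith [Nat.zero_le i, Nat.zero_le j]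
    · simp only [h1, h, Nat.add_sub_cancel_left]
  have hf : ((Finset.range (a + 1) : Set ℕ) ×ˢ gset m).Finite :=
    (Finset.finite_toSet _).prod (gset_finite m)
  calc (gset (p ^ a * m)).ncard ≤ _ := Set.ncard_le_ncard hsub (hf.image _)
    _ ≤ _ := Set.ncard_image_le hf
    _ = _ := by rw [Set.ncard_prod, Set.ncard_coe_finset, Finset.card_range]

lemma gset_one : (gset 1).ncard ≤ 9 := by
  have hsub : gset 1 ⊆ Set.image (fun q : ℤ × ℤ => (⟨q.1, q.2⟩ : GaussianInt))
      ((Finset.Icc (-1 : ℤ) 1 ×ˢ Finset.Icc (-1 : ℤ) 1 : Finset (ℤ × ℤ)) : Set (ℤ × ℤ)) := by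
    intro z hz
    have hz' : z.norm = ((1 : ℕ) : ℤ) := hz
    rw [Zsqrtd.norm_def] at hz'
    refine ⟨(z.re, z.im), ?_, rfl⟩
    simp only [Finset.coe_product, Set.mem_prod, Finset.coe_Icc, Set.mem_Icc]
    push_cast at hz'
    refine ⟨⟨?_, ?_⟩, ?_, ?_⟩ <;> nlinarith [sq_nonneg (z.re), sq_nonneg z.im]
  calc _ ≤ _ := Set.ncard_le_ncard hsub ((Finset.finite_toSet _).image _)
    _ ≤ _ := Set.ncard_image_le (Finset.finite_toSet _)
    _ = 9 := by rw [Set.ncard_coe_finset]; rfl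

lemma gset_le (n : ℕ) (hn : n ≠ 0) : (gset n).ncard ≤ 9 * n.divisors.card := by
  induction n using Nat.recOnPrimePow with
  | zero => exact absurd rfl hn
  | one => simpa using gset_one
  | prime_pow_mul m p a hp hm ha ih =>
    have hm0 : m ≠ 0 := by rintro rfl; simp at hm
    have hc : (p ^ a).Coprime m := ((Nat.Prime.coprime_iff_not_dvd hp).2 hm).pow_left a
    rw [hc.card_divisors_mul, Nat.divisors_prime_pow hp, Finset.card_map, Finset.card_range]
    calc _ ≤ (a + 1) * (gset m).ncard := gset_step p a m hp hm
      _ ≤ (a + 1) * (9 * m.divisors.card) := Nat.mul_le_mul_left _ (ih hm0)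
      _ = _ := by ring

lemma add_one_le_rpow (δ : ℝ) (hδ : 0 < δ) : ∃ B : ℝ, 1 ≤ B ∧ ∀ a : ℕ, ∀ p : ℕ, 2 ≤ p →
    (a + 1 : ℝ) ≤ B * ((p : ℝ) ^ a) ^ δ := by
  have hl : 0 < Real.log 2 := Real.log_pos (by norm_num)
  refine ⟨1 + 1 / (δ * Real.log 2), by have : 0 < 1 / (δ * Real.log 2) := by positivity
                                       linarith, ?_⟩
  intro a p hp
  have hp' : (2 : ℝ) ≤ p := by exact_mod_cast hp
  have h1 : ((2 : ℝ) ^ a) ^ δ ≤ ((p : ℝ) ^ a) ^ δ := by gcongr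
  have h2 : 1 + a * (δ * Real.log 2) ≤ ((2 : ℝ) ^ a) ^ δ := by
    rw [Real.rpow_def_of_pos (by positivity), Real.log_pow]
    nlinarith [Real.add_one_le_exp (a * Real.log 2 * δ)]
  set c := δ * Real.log 2 with hc
  have hcp : 0 < c := by positivity
  have ha : (0 : ℝ) ≤ a := a.cast_nonneg
  calc (a + 1 : ℝ) ≤ (1 + 1 / c) * (1 + a * c) := by
        have : (1 + 1 / c) * (1 + a * c) = 1 + a + a * c + 1 / c := by field_simp; ring
        rw [this]
        have : 0 < 1 / c := by positivity
        nlinarith [mul_nonneg ha hcp.le]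
    _ ≤ _ := by gcongr; exact h2.trans h1

lemma divisor_bound (δ : ℝ) (hδ : 0 < δ) : ∃ C : ℝ, 0 < C ∧ ∀ n : ℕ, n ≠ 0 →
    (n.divisors.card : ℝ) ≤ C * (n : ℝ) ^ δ := by
  obtain ⟨B, hB, hb⟩ := add_one_le_rpow δ hδ
  obtain ⟨P, hP⟩ := exists_nat_ge ((2 : ℝ) ^ (1 / δ))
  refine ⟨B ^ P, by positivity, ?_⟩
  intro n hn
  have hterm : ∀ p ∈ n.primeFactors, ((n.factorization p + 1 : ℕ) : ℝ) ≤
      (if p < P then B else 1) * ((p : ℝ) ^ n.factorization p) ^ δ := by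
    intro p hp
    have hpp := (Nat.prime_of_mem_primeFactors hp).two_le
    split_ifs with h
    · push_cast
      exact hb _ _ hpp
    · push Not at h
      have h1 : (2 : ℝ) ≤ (p : ℝ) ^ δ := by
        calc (2 : ℝ) = ((2 : ℝ) ^ (1 / δ)) ^ δ := by
              rw [← Real.rpow_mul (by norm_num), one_div, inv_mul_cancel₀ hδ.ne', Real.rpow_one]
          _ ≤ _ := by
              gcongr
              exact hP.trans (by exact_mod_cast h)
      have h2 : ((p : ℝ) ^ n.factorization p) ^ δ = ((p : ℝ) ^ δ) ^ n.factorization p := by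
        rw [← Real.rpow_natCast, ← Real.rpow_mul (by positivity), mul_comm, Real.rpow_mul (by positivity),
          Real.rpow_natCast]
      rw [one_mul, h2]
      calc ((n.factorization p + 1 : ℕ) : ℝ) ≤ ((2 ^ n.factorization p : ℕ) : ℝ) := by
            exact_mod_cast Nat.lt_two_pow_self
        _ = (2 : ℝ) ^ n.factorization p := by push_cast; rfl
        _ ≤ _ := by gcongr
  rw [Nat.card_divisors hn]
  push_cast
  calc (∏ p ∈ n.primeFactors, ((n.factorization p : ℝ) + 1))
      ≤ ∏ p ∈ n.primeFactors, ((if p < P then B else 1) * ((p : ℝ) ^ n.factorization p) ^ δ) := by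
        apply Finset.prod_le_prod
        · intros; positivity
        · intro p hp
          exact_mod_cast hterm p hp
    _ = (∏ p ∈ n.primeFactors, (if p < P then B else 1)) *
        (∏ p ∈ n.primeFactors, (p : ℝ) ^ n.factorization p) ^ δ := by
        rw [Finset.prod_mul_distrib, Real.finsetProd_rpow]
        intros; positivity
    _ ≤ B ^ P * (n : ℝ) ^ δ := by
        have h1 : (∏ p ∈ n.primeFactors, (p : ℝ) ^ n.factorization p) = n := by
          conv_rhs => rw [← Nat.prod_factorization_pow_eq_self hn]
          rw [Finsupp.prod, Nat.support_factorization]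
          push_cast
          rfl
        rw [h1]
        gcongr
        rw [← Finset.prod_filter, Finset.prod_const]
        apply pow_le_pow_right₀ hB
        calc _ ≤ (Finset.range P).card := by
              apply Finset.card_le_card
              intro p hp
              simp only [Finset.mem_filter] at hp
              simpa using hp.2
          _ = P := Finset.card_range P

lemma three_points (K : ℤ) (s a b c : ℤ × ℤ)
    (ha : nsq (2 * a.1 - s.1, 2 * a.2 - s.2) = K) (hb : nsq (2 * b.1 - s.1, 2 * b.2 - s.2) = K)
    (hc : nsq (2 * c.1 - s.1, 2 * c.2 - s.2) = K) :
    K * ((b.1 - a.1) * (c.2 - a.2) - (b.2 - a.2) * (c.1 - a.1)) ^ 2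
      = nsq (b - a) * nsq (c - a) * nsq (b - c) := by
  obtain ⟨s1, s2⟩ := s
  obtain ⟨a1, a2⟩ := a
  obtain ⟨b1, b2⟩ := b
  obtain ⟨c1, c2⟩ := c
  simp only [nsq, Prod.fst_sub, Prod.snd_sub] at *
  obtain ⟨u1, rfl⟩ : ∃ u, b1 = a1 + u := ⟨b1 - a1, by ring⟩
  obtain ⟨u2, rfl⟩ : ∃ u, b2 = a2 + u := ⟨b2 - a2, by ring⟩
  obtain ⟨v1, rfl⟩ : ∃ u, c1 = a1 + u := ⟨c1 - a1, by ring⟩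
  obtain ⟨v2, rfl⟩ : ∃ u, c2 = a2 + u := ⟨c2 - a2, by ring⟩
  obtain ⟨y1, hy1⟩ : ∃ y, y = 2 * a1 - s1 := ⟨_, rfl⟩
  obtain ⟨y2, hy2⟩ : ∃ y, y = 2 * a2 - s2 := ⟨_, rfl⟩
  rw [← hy1, ← hy2] at ha
  have hu : y1 * u1 + y2 * u2 = -(u1 ^ 2 + u2 ^ 2) := by
    subst hy1 hy2; linarith
  have hv : y1 * v1 + y2 * v2 = -(v1 ^ 2 + v2 ^ 2) := by
    subst hy1 hy2; linarith
  have h1 : K * (u1 * v2 - u2 * v1) ^ 2 = ((y1 * u1 + y2 * u2) * v1 - (y1 * v1 + y2 * v2) * u1) ^ 2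
      + ((y1 * u1 + y2 * u2) * v2 - (y1 * v1 + y2 * v2) * u2) ^ 2 := by
    rw [← ha]; ring
  rw [hu, hv] at h1
  linear_combination h1

lemma nsq_pos {a : ℤ × ℤ} (h : a ≠ 0) : 0 < nsq a := by
  unfold nsq
  by_contra hh
  apply h
  have h1 : a.1 = 0 := by nlinarith [sq_nonneg a.1, sq_nonneg a.2]
  have h2 : a.2 = 0 := by nlinarith [sq_nonneg a.1, sq_nonneg a.2]
  exact Prod.ext h1 h2

/-- lattice points on a circle that lie in a ball -/
def eset (L K : ℤ) (s : ℤ × ℤ) : Set (ℤ × ℤ) :=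
  {x | nsq (2 * x.1 - s.1, 2 * x.2 - s.2) = K ∧ nsq x ≤ L ^ 2}

lemma eset_finite (L K : ℤ) (s : ℤ × ℤ) : (eset L K s).Finite := by
  have hf : ((Set.Icc (-(L ^ 2)) (L ^ 2)) ×ˢ (Set.Icc (-(L ^ 2)) (L ^ 2))).Finite :=
    (Set.finite_Icc _ _).prod (Set.finite_Icc _ _)
  refine hf.subset ?_
  rintro ⟨x, y⟩ ⟨-, h⟩
  simp only [nsq] at h
  simp only [Set.mem_prod, Set.mem_Icc]
  refine ⟨⟨?_, ?_⟩, ?_, ?_⟩ <;> nlinarith [sq_nonneg x, sq_nonneg y,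
    Int.le_self_sq x, Int.le_self_sq y, Int.le_self_sq (-x), Int.le_self_sq (-y)]

lemma eset_large (L K : ℤ) (s : ℤ × ℤ) (hK : 64 * L ^ 6 < K) : (eset L K s).ncard ≤ 2 := by
  by_contra hcon
  push Not at hcon
  rw [Set.two_lt_ncard_iff (eset_finite L K s)] at hcon
  obtain ⟨a, b, c, ⟨ha, ha'⟩, ⟨hb, hb'⟩, ⟨hc, hc'⟩, hab, hac, hbc⟩ := hcon
  have h := three_points K s a b c ha hb hc
  have hd : ∀ x y : ℤ × ℤ, nsq x ≤ L ^ 2 → nsq y ≤ L ^ 2 → nsq (x - y) ≤ 4 * L ^ 2 := by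
    intro x y hx hy
    simp only [nsq, Prod.fst_sub, Prod.snd_sub] at hx hy ⊢
    linarith [sq_nonneg (x.1 + y.1), sq_nonneg (x.2 + y.2)]
  have p1 := nsq_pos (sub_ne_zero.2 hab.symm)
  have p2 := nsq_pos (sub_ne_zero.2 hac.symm)
  have p3 := nsq_pos (sub_ne_zero.2 hbc)
  have q1 := hd b a hb' ha'
  have q2 := hd c a hc' ha'
  have q3 := hd b c hb' hc'
  have hprod : nsq (b - a) * nsq (c - a) * nsq (b - c) ≤ (4 * L ^ 2) * (4 * L ^ 2) * (4 * L ^ 2) := by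
    gcongr
  have hpp := mul_pos (mul_pos p1 p2) p3
  rw [← h] at hprod hpp
  set D := ((b.1 - a.1) * (c.2 - a.2) - (b.2 - a.2) * (c.1 - a.1)) ^ 2 with hD
  have hK0 : 0 < K := lt_of_le_of_lt (by positivity) hK
  have hD1 : 0 < D := pos_of_mul_pos_right hpp hK0.le
  have hKD : K ≤ K * D := le_mul_of_one_le_right hK0.le hD1
  have h64 : (4 * L ^ 2) * (4 * L ^ 2) * (4 * L ^ 2) = 64 * L ^ 6 := by ring
  linarith

lemma eset_small (L K : ℤ) (s : ℤ × ℤ) : (eset L K s).ncard ≤ (gset K.toNat).ncard := by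
  refine Set.ncard_le_ncard_of_injOn
    (fun x : ℤ × ℤ => (⟨2 * x.1 - s.1, 2 * x.2 - s.2⟩ : GaussianInt)) ?_ ?_ (gset_finite _)
  · rintro x ⟨hx, -⟩
    have hK : 0 ≤ K := by rw [← hx]; unfold nsq; positivity
    change Zsqrtd.norm _ = _
    rw [Int.toNat_of_nonneg hK, Zsqrtd.norm_def, ← hx]
    simp only [nsq]
    ring
  · intro x _ y _ h
    simp only [Zsqrtd.ext_iff] at h
    exact Prod.ext (by linarith [h.1]) (by linarith [h.2])

lemma gset_zero : (gset 0).ncard ≤ 1 := by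
  rw [Set.ncard_le_one (gset_finite 0)]
  intro a ha b hb
  have ha' : a.norm = ((0 : ℕ) : ℤ) := ha
  have hb' : b.norm = ((0 : ℕ) : ℤ) := hb
  rw [Nat.cast_zero, GaussianInt.norm_eq_zero] at ha' hb'
  rw [ha', hb']

lemma eset_bound (ε : ℝ) (hε : 0 < ε) : ∃ C : ℝ, 0 < C ∧ ∀ (L K : ℤ) (s : ℤ × ℤ), 1 ≤ L →
    ((eset L K s).ncard : ℝ) ≤ C * (L : ℝ) ^ ε := by
  obtain ⟨C, hC, hd⟩ := divisor_bound (ε / 6) (by positivity)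
  refine ⟨2 + 9 * C * 64 ^ (ε / 6), by positivity, ?_⟩
  intro L K s hL
  have hL' : (1 : ℝ) ≤ L := by exact_mod_cast hL
  have hLε : (1 : ℝ) ≤ (L : ℝ) ^ ε := Real.one_le_rpow hL' hε.le
  have hX : 0 < 9 * C * (64 : ℝ) ^ (ε / 6) := by positivity
  have h2 : ∀ t : ℕ, t ≤ 2 → (t : ℝ) ≤ (2 + 9 * C * 64 ^ (ε / 6)) * (L : ℝ) ^ ε := by
    intro t ht
    have : (t : ℝ) ≤ 2 := by exact_mod_cast ht
    nlinarith
  rcases lt_or_ge (64 * L ^ 6) K with h | h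
  · exact h2 _ (eset_large L K s h)
  · have hs := eset_small L K s
    rcases Nat.eq_zero_or_pos K.toNat with h0 | hpos
    · rw [h0] at hs
      exact h2 _ (by have := gset_zero; omega)
    · have hg := hs.trans (gset_le _ hpos.ne')
      have hKle : (K.toNat : ℝ) ≤ 64 * (L : ℝ) ^ 6 := by
        have : (K.toNat : ℤ) ≤ 64 * L ^ 6 := by omega
        exact_mod_cast this
      calc ((eset L K s).ncard : ℝ) ≤ 9 * (K.toNat.divisors.card : ℝ) := by exact_mod_cast hg
        _ ≤ 9 * (C * (K.toNat : ℝ) ^ (ε / 6)) := by gcongr; exact hd _ hpos.ne'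
        _ ≤ 9 * (C * (64 * (L : ℝ) ^ 6) ^ (ε / 6)) := by gcongr
        _ = (9 * C * 64 ^ (ε / 6)) * (L : ℝ) ^ ε := by
          rw [Real.mul_rpow (by norm_num) (by positivity), ← Real.rpow_natCast (L : ℝ) 6,
            ← Real.rpow_mul (by positivity)]
          rw [show ((6 : ℕ) : ℝ) * (ε / 6) = ε by push_cast; ring]
          ring
        _ ≤ _ := by gcongr; linarith

lemma simDyadic_le {k : ℕ} {n : ℤ × ℤ} (h : simDyadic ((2 : ℝ) ^ k) n) : nsq n ≤ ((2 : ℤ) ^ k) ^ 2 := by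
  have h1 : znorm n ≤ (2 : ℝ) ^ k := by
    rcases h with ⟨h, h'⟩ | ⟨-, -, h⟩
    · rw [h]; exact h'
    · exact h
  unfold znorm at h1
  rw [Real.sqrt_le_left (by positivity)] at h1
  unfold nsq
  exact_mod_cast h1

theorem stmt10 (ε : ℝ) (hε : 0 < ε) :
    ∃ C : ℝ, 0 < C ∧ ∀ N N₁ N₂ N₃ : ℝ,
      IsDyadic N → IsDyadic N₁ → IsDyadic N₂ → IsDyadic N₃ → ∀ m : ℤ, ∀ n₁ n₃ : ℤ × ℤ,
      (({p : (ℤ × ℤ) × (ℤ × ℤ) |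
          SMem N N₁ N₂ N₃ m p.1 n₁ p.2 n₃}).ncard : ℝ) ≤ C * (min N N₂) ^ ε := by
  obtain ⟨C, hC, hb⟩ := eset_bound ε hε
  refine ⟨C, hC, ?_⟩
  rintro N N₁ N₂ N₃ ⟨k, rfl⟩ - ⟨l, rfl⟩ - m n₁ n₃
  set K : ℤ := 2 * (m + nsq n₁ + nsq n₃) - nsq (n₁ + n₃) with hK
  have hA : ({p : (ℤ × ℤ) × (ℤ × ℤ) | SMem (2 ^ k) N₁ (2 ^ l) N₃ m p.1 n₁ p.2 n₃}).ncard
      ≤ (eset (2 ^ k) K (n₁ + n₃)).ncard := by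
    refine Set.ncard_le_ncard_of_injOn Prod.fst ?_ ?_ (eset_finite _ _ _)
    · rintro ⟨n, n₂⟩ ⟨h, -, -, hm, hn, -, -, -⟩
      refine ⟨?_, simDyadic_le hn⟩
      have e1 := congrArg Prod.fst h
      have e2 := congrArg Prod.snd h
      simp only [Prod.fst_add, Prod.fst_sub, Prod.snd_add, Prod.snd_sub] at e1 e2
      rw [hK, ← hm]
      simp only [phiFn, nsq, Prod.fst_add, Prod.snd_add, e1, e2]
      ring
    · rintro ⟨n, n₂⟩ ⟨h, -⟩ ⟨n', n₂'⟩ ⟨h', -⟩ heq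
      simp only at h h' heq
      refine Prod.ext heq ?_
      have : n₁ - n₂ + n₃ = n₁ - n₂' + n₃ := by rw [← h, ← h', heq]
      simpa using this
  have hB : ({p : (ℤ × ℤ) × (ℤ × ℤ) | SMem (2 ^ k) N₁ (2 ^ l) N₃ m p.1 n₁ p.2 n₃}).ncard
      ≤ (eset (2 ^ l) K (n₁ + n₃)).ncard := by
    refine Set.ncard_le_ncard_of_injOn Prod.snd ?_ ?_ (eset_finite _ _ _)
    · rintro ⟨n, n₂⟩ ⟨h, -, -, hm, -, -, hn, -⟩
      refine ⟨?_, simDyadic_le hn⟩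
      have e1 := congrArg Prod.fst h
      have e2 := congrArg Prod.snd h
      simp only [Prod.fst_add, Prod.fst_sub, Prod.snd_add, Prod.snd_sub] at e1 e2
      rw [hK, ← hm]
      simp only [phiFn, nsq, Prod.fst_add, Prod.snd_add, e1, e2]
      ring
    · rintro ⟨n, n₂⟩ ⟨h, -⟩ ⟨n', n₂'⟩ ⟨h', -⟩ heq
      simp only at h h' heq
      refine Prod.ext ?_ heq
      simp only
      rw [h, h', heq]
  rcases min_choice ((2 : ℝ) ^ k) ((2 : ℝ) ^ l) with h | h
  · rw [h]
    have := hb (2 ^ k) K (n₁ + n₃) (one_le_pow₀ (by norm_num))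
    push_cast at this
    exact le_trans (by exact_mod_cast hA) this
  · rw [h]
    have := hb (2 ^ l) K (n₁ + n₃) (one_le_pow₀ (by norm_num))
    push_cast at this
    exact le_trans (by exact_mod_cast hB) this
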